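/- arXiv:1811.05624 — 3 statements merged into one kernel-verified Lean document; each statement's English description precedes it below -/
import Mathlib

section
/- Let m ≥ 2 be an integer, let t_1, …, t_m be positive real numbers, let λ be a real number with 0 < λ < 1, let η be a real number with η ≥ λ/2, and let C > 0 be a real number. Then η·∑_{j=1}^m t_j² + C·∑_{j=1}^m λ^{m−j}·t_j + ∑_{1≤i<j≤m} λ^{j−i}·t_i·t_j < η·(∑_{j=1}^m t_j)² + C·(∑_{j=1}^m t_j). -/
open Finset

/-- The square of a sum over `Icc 1 m` splits into its diagonal and twice its upper triangle. -/
lemma sq_sum_Icc_eq {R : Type*} [CommRing R] (t : ℕ → R) (m : ℕ) :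
    (∑ j ∈ Icc 1 m, t j) ^ 2
      = ∑ j ∈ Icc 1 m, t j ^ 2 + 2 * ∑ i ∈ Icc 1 m, ∑ j ∈ Icc (i + 1) m, t i * t j := by
  induction m with
  | zero => simp
  | succ m ih =>
    have h : ∑ i ∈ Icc 1 m, ∑ j ∈ Icc (i + 1) (m + 1), t i * t j
        = ∑ i ∈ Icc 1 m, ∑ j ∈ Icc (i + 1) m, t i * t j + (∑ i ∈ Icc 1 m, t i) * t (m + 1) := by
      rw [sum_mul, ← sum_add_distrib]
      refine sum_congr rfl fun i hi => ?_
      have := (mem_Icc.mp hi).2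
      rw [sum_Icc_succ_top (by omega)]
    have h_last : ∑ j ∈ Icc (m + 1 + 1) (m + 1), t (m + 1) * t j = 0 := by simp
    simp only [sum_Icc_succ_top (Nat.le_add_left 1 m), h, h_last]
    linear_combination ih

/-- Type-1 false-name attack: the total virtual credits of a chain of `m` replicas
with task efforts `t 1, …, t m` are strictly less than the virtual credits of the
original node. -/
theorem mwc_type1_credits_lt
    (m : ℕ) (hm : 2 ≤ m) (t : ℕ → ℝ) (ht : ∀ j ∈ Icc 1 m, 0 < t j)
    (lam : ℝ) (hlam0 : 0 < lam) (hlam1 : lam < 1)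
    (eta : ℝ) (heta : lam / 2 ≤ eta)
    (C : ℝ) (hC : 0 < C) :
    eta * ∑ j ∈ Icc 1 m, (t j) ^ 2
      + C * ∑ j ∈ Icc 1 m, lam ^ (m - j) * t j
      + ∑ i ∈ Icc 1 m, ∑ j ∈ Icc (i + 1) m, lam ^ (j - i) * t i * t j
    < eta * (∑ j ∈ Icc 1 m, t j) ^ 2 + C * ∑ j ∈ Icc 1 m, t j := by
  have h_chain : ∑ j ∈ Icc 1 m, lam ^ (m - j) * t j < ∑ j ∈ Icc 1 m, t j := by
    refine sum_lt_sum (fun j hj => ?_) ⟨1, mem_Icc.mpr ⟨le_rfl, by omega⟩, ?_⟩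
    · exact mul_le_of_le_one_left (ht j hj).le (pow_le_one₀ hlam0.le hlam1.le)
    · exact mul_lt_of_lt_one_left (ht 1 (mem_Icc.mpr ⟨le_rfl, by omega⟩))
        (pow_lt_one₀ hlam0.le hlam1 (by omega))
  have h_cross : ∑ i ∈ Icc 1 m, ∑ j ∈ Icc (i + 1) m, lam ^ (j - i) * t i * t j
      ≤ 2 * eta * ∑ i ∈ Icc 1 m, ∑ j ∈ Icc (i + 1) m, t i * t j := by
    simp only [mul_sum]
    refine sum_le_sum fun i hi => sum_le_sum fun j hj => ?_
    rw [mem_Icc] at hj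
    have h_pow : lam ^ (j - i) ≤ lam := pow_le_of_le_one hlam0.le hlam1.le (by omega)
    have h_pos : 0 < t i * t j := mul_pos (ht i hi) (ht j (mem_Icc.mpr ⟨by omega, hj.2⟩))
    rw [mul_assoc]
    exact mul_le_mul_of_nonneg_right (by linarith) h_pos.le
  rw [sq_sum_Icc_eq]
  linarith [mul_lt_mul_of_pos_left h_chain hC]
end

section
/- Let m ≥ 2 be an integer, let t_1, …, t_m be positive real numbers, let λ ∈ (0,1), η ≥ λ/2, C > 0 and E > 0 be real numbers. Set b_v = η·(∑_{j=1}^m t_j)² + (∑_{j=1}^m t_j)·C, and for each j set b_j = η·t_j² + λ^{m−j}·t_j·C + t_j·∑_{k=j+1}^m λ^{k−j}·t_k. Then b_v/(b_v + E) > (∑_{j=1}^m b_j)/((∑_{j=1}^m b_j) + E). -/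
open Finset

/-- The square of a sum over `Icc 1 m`, split into diagonal and upper-triangular parts. -/
theorem sq_sum_Icc_eq_sum_sq_add {R : Type*} [CommRing R] (m : ℕ) (t : ℕ → R) :
    (∑ j ∈ Icc 1 m, t j) ^ 2
      = ∑ j ∈ Icc 1 m, (t j ^ 2 + 2 * (t j * ∑ k ∈ Icc (j + 1) m, t k)) := by
  induction m with
  | zero => simp
  | succ n ih =>
    have hstep : ∀ j ∈ Icc 1 n,
        t j ^ 2 + 2 * (t j * ∑ k ∈ Icc (j + 1) (n + 1), t k)
          = (t j ^ 2 + 2 * (t j * ∑ k ∈ Icc (j + 1) n, t k)) + t j * (2 * t (n + 1)) := by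
      intro j hj
      have hjn := (mem_Icc.mp hj).2
      rw [sum_Icc_succ_top (by omega)]
      ring
    rw [sum_Icc_succ_top (by omega), sum_Icc_succ_top (by omega), sum_congr rfl hstep,
      sum_add_distrib, ← ih, ← sum_mul, Icc_eq_empty (by omega : ¬ n + 1 + 1 ≤ n + 1)]
    simp only [sum_empty]
    ring

/-- Type-1 false-name attacks are unprofitable at noise factor `σ = 1`: the
original node's winning probability strictly exceeds the total winning
probability of its chain of replicas. -/
theorem mwc_type1_prob_gt
    (m : ℕ) (hm : 2 ≤ m) (t : ℕ → ℝ) (ht : ∀ j ∈ Icc 1 m, 0 < t j)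
    (lam : ℝ) (hlam0 : 0 < lam) (hlam1 : lam < 1)
    (eta : ℝ) (heta : lam / 2 ≤ eta)
    (C : ℝ) (hC : 0 < C) (E : ℝ) (hE : 0 < E)
    (bv : ℝ)
    (hbv : bv = eta * (∑ j ∈ Icc 1 m, t j) ^ 2 + (∑ j ∈ Icc 1 m, t j) * C)
    (b : ℕ → ℝ)
    (hb : ∀ j ∈ Icc 1 m,
      b j = eta * (t j) ^ 2 + lam ^ (m - j) * t j * C
        + t j * ∑ k ∈ Icc (j + 1) m, lam ^ (k - j) * t k) :
    bv / (bv + E)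
      > (∑ j ∈ Icc 1 m, b j) / ((∑ j ∈ Icc 1 m, b j) + E) := by
  have hb_pos : ∀ j ∈ Icc 1 m, 0 < b j := by
    intro j hj
    have htj := ht j hj
    have heta0 : 0 < eta := by linarith
    have hsum : 0 ≤ ∑ k ∈ Icc (j + 1) m, lam ^ (k - j) * t k := by
      refine sum_nonneg fun k hk => ?_
      have htk := ht k (by simp only [mem_Icc] at *; omega)
      positivity
    rw [hb j hj]
    positivity
  have hinner : ∀ j ∈ Icc 1 m,
      t j * ∑ k ∈ Icc (j + 1) m, lam ^ (k - j) * t k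
        ≤ eta * (2 * (t j * ∑ k ∈ Icc (j + 1) m, t k)) := by
    intro j hj
    have hle : ∑ k ∈ Icc (j + 1) m, lam ^ (k - j) * t k
        ≤ 2 * eta * ∑ k ∈ Icc (j + 1) m, t k := by
      rw [mul_sum]
      refine sum_le_sum fun k hk => ?_
      simp only [mem_Icc] at hj hk
      have htk := ht k (by simp only [mem_Icc]; omega)
      have hpow : lam ^ (k - j) ≤ lam :=
        pow_le_of_le_one hlam0.le hlam1.le (by omega)
      exact mul_le_mul_of_nonneg_right (by linarith) htk.le
    calc t j * ∑ k ∈ Icc (j + 1) m, lam ^ (k - j) * t k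
        ≤ t j * (2 * eta * ∑ k ∈ Icc (j + 1) m, t k) :=
          mul_le_mul_of_nonneg_left hle (ht j hj).le
      _ = eta * (2 * (t j * ∑ k ∈ Icc (j + 1) m, t k)) := by ring
  have hlt : ∑ j ∈ Icc 1 m, b j < bv := by
    rw [hbv, sq_sum_Icc_eq_sum_sq_add, mul_sum, sum_mul, ← sum_add_distrib]
    have h1 : 1 ∈ Icc 1 m := by simp only [mem_Icc]; omega
    refine sum_lt_sum (fun j hj => ?_) ⟨1, h1, ?_⟩
    · have hpow : lam ^ (m - j) ≤ 1 := pow_le_one₀ hlam0.le hlam1.le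
      have hC' := mul_le_mul_of_nonneg_right hpow (mul_pos (ht j hj) hC).le
      rw [hb j hj]
      linarith [hinner j hj]
    · have hpow : lam ^ (m - 1) < 1 := pow_lt_one₀ hlam0.le hlam1 (by omega)
      have hC' := mul_lt_mul_of_pos_right hpow (mul_pos (ht 1 h1) hC)
      rw [hb 1 h1]
      linarith [hinner 1 h1]
  have hB : 0 ≤ ∑ j ∈ Icc 1 m, b j := sum_nonneg fun j hj => (hb_pos j hj).le
  rw [gt_iff_lt, div_lt_div_iff₀ (by linarith) (by linarith)]
  linarith [mul_lt_mul_of_pos_right hlt hE]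
end

section
/- Let m ≥ 2 be an integer, let t_1, …, t_m be positive real numbers, let η > 0, C ≥ 0 and E > 0 be real numbers. Set b_v = η·(∑_{j=1}^m t_j)² + (∑_{j=1}^m t_j)·C, and for each j set b_j = η·t_j² + t_j·C. Then b_v/(b_v + E) > (∑_{j=1}^m b_j)/((∑_{j=1}^m b_j) + E). -/
open Finset

/-- The sum of the squares of at least two positive reals is less than the square of their sum. -/
theorem sum_sq_lt_sq_sum_of_pos {ι : Type*} {s : Finset ι} {f : ι → ℝ}
    (hs : s.Nontrivial) (hf : ∀ i ∈ s, 0 < f i) :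
    ∑ i ∈ s, f i ^ 2 < (∑ i ∈ s, f i) ^ 2 := by
  rw [sq (∑ i ∈ s, f i), sum_mul]
  refine sum_lt_sum_of_nonempty hs.nonempty fun i hi => ?_
  obtain ⟨j, hj, hji⟩ := hs.exists_ne i
  rw [sq]
  exact mul_lt_mul_of_pos_left
    (single_lt_sum hji hi hj (hf j hj) fun k hk _ => (hf k hk).le) (hf i hi)

/-- The map `x ↦ x / (x + E)` is strictly increasing on the nonnegative reals for `E > 0`. -/
theorem div_add_lt_div_add_of_lt {x y E : ℝ} (hx : 0 ≤ x) (hxy : x < y) (hE : 0 < E) :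
    x / (x + E) < y / (y + E) := by
  rw [div_lt_div_iff₀ (by linarith) (by linarith)]
  linarith [mul_lt_mul_of_pos_right hxy hE, mul_comm x y]

/-- Type-2 false-name attacks are unprofitable at noise factor `σ = 1`: the
original node's winning probability strictly exceeds the total winning
probability of its parallel replicas. -/
theorem mwc_type2_prob_gt
    (m : ℕ) (hm : 2 ≤ m) (t : ℕ → ℝ) (ht : ∀ j ∈ Icc 1 m, 0 < t j)
    (eta : ℝ) (heta : 0 < eta) (C : ℝ) (hC : 0 ≤ C) (E : ℝ) (hE : 0 < E)
    (bv : ℝ)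
    (hbv : bv = eta * (∑ j ∈ Icc 1 m, t j) ^ 2 + (∑ j ∈ Icc 1 m, t j) * C)
    (b : ℕ → ℝ) (hb : ∀ j ∈ Icc 1 m, b j = eta * (t j) ^ 2 + t j * C) :
    bv / (bv + E)
      > (∑ j ∈ Icc 1 m, b j) / ((∑ j ∈ Icc 1 m, b j) + E) := by
  have hs : (Icc 1 m).Nontrivial :=
    ⟨1, by simp; omega, 2, by simp; omega, by norm_num⟩
  have hsum : ∑ j ∈ Icc 1 m, b j
      = eta * ∑ j ∈ Icc 1 m, t j ^ 2 + (∑ j ∈ Icc 1 m, t j) * C := by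
    rw [sum_congr rfl hb, sum_add_distrib, mul_sum, sum_mul]
  have hb_nonneg : 0 ≤ ∑ j ∈ Icc 1 m, b j := sum_nonneg fun j hj => by
    have := ht j hj
    rw [hb j hj]
    positivity
  refine div_add_lt_div_add_of_lt hb_nonneg ?_ hE
  rw [hsum, hbv]
  gcongr
  exact sum_sq_lt_sq_sum_of_pos hs ht
end
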